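/- For any set I_x ⊆ G_x of representatives of the left cosets of G_{xy} in G_x and any set I_y ⊆ G_y of representatives of the left cosets of G_{xy} in G_y, the subgroup of G generated by I_x ∪ I_y acts transitively on the orbit: for every (u,v) ∈ 𝒪 there exists σ in this subgroup with (σ(x), σ(y)) = (u,v). -/

import Mathlib

open IntermediateField
open scoped BigOperators Classical

set_option synthInstance.maxHeartbeats 1000000
set_option maxHeartbeats 1600000

noncomputable section

namespace QuadrantWalk

variable {K : Type} [Field K] [Algebra ℂ K]

/-- Evaluation of the step (Laurent) polynomial `S(X,Y) = ∑ w_{i,j} X^i Y^j`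
    at a pair of elements of a field. -/
def stepEval (St : Finset (ℤ × ℤ)) (w : ℤ × ℤ → ℂ) (u v : K) : K :=
  ∑ p ∈ St, algebraMap ℂ K (w p) * u ^ p.1 * v ^ p.2

/-- The step polynomial involves both `X` and `Y`. -/
def NotUnivariate (St : Finset (ℤ × ℤ)) : Prop :=
  (∃ p ∈ St, ∃ q ∈ St, p.1 ≠ q.1) ∧ ∃ p ∈ St, ∃ q ∈ St, p.2 ≠ q.2

/-- The kernel polynomial `K̃(X,Y,t) = X^mx * Y^my * (1 - t·S(X,Y))` as an element of
`ℂ[X,Y,t]`, with variables `0 ↦ X`, `1 ↦ Y`, `2 ↦ t`. -/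
def kernelPoly (St : Finset (ℤ × ℤ)) (w : ℤ × ℤ → ℂ) (mx my : ℕ) :
    MvPolynomial (Fin 3) ℂ :=
  MvPolynomial.X 0 ^ mx * MvPolynomial.X 1 ^ my -
    MvPolynomial.X 2 *
      ∑ p ∈ St, MvPolynomial.C (w p) *
        MvPolynomial.X 0 ^ (p.1 + (mx : ℤ)).toNat *
        MvPolynomial.X 1 ^ (p.2 + (my : ℤ)).toNat

/-- `-mx` (resp. `-my`) is the smallest `X`-exponent (resp. `Y`-exponent) of the model. -/
structure ExponentBounds (St : Finset (ℤ × ℤ)) (mx my : ℕ) : Prop where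
  lowerX : ∀ p ∈ St, -(mx : ℤ) ≤ p.1
  lowerY : ∀ p ∈ St, -(my : ℤ) ≤ p.2
  attainX : ∃ p ∈ St, p.1 = -(mx : ℤ)
  attainY : ∃ p ∈ St, p.2 = -(my : ℤ)

/-- `x`-adjacency : equal first coordinates and equal values of `S`. -/
def XAdj (St : Finset (ℤ × ℤ)) (w : ℤ × ℤ → ℂ) (a b : K × K) : Prop :=
  a.1 = b.1 ∧ stepEval St w a.1 a.2 = stepEval St w b.1 b.2

/-- `y`-adjacency : equal second coordinates and equal values of `S`. -/
def YAdj (St : Finset (ℤ × ℤ)) (w : ℤ × ℤ → ℂ) (a b : K × K) : Prop :=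
  a.2 = b.2 ∧ stepEval St w a.1 a.2 = stepEval St w b.1 b.2

/-- Adjacency. -/
def Adj (St : Finset (ℤ × ℤ)) (w : ℤ × ℤ → ℂ) (a b : K × K) : Prop :=
  XAdj St w a b ∨ YAdj St w a b

/-- The orbit of the walk: the equivalence class of `(x,y)` under the
reflexive-transitive closure of adjacency. -/
def orbit (St : Finset (ℤ × ℤ)) (w : ℤ × ℤ → ℂ) (x y : K) : Set (K × K) :=
  {a | Relation.ReflTransGen (Adj St w) (x, y) a}

/-- `k = ℂ(S(x,y))`. -/
def kF (St : Finset (ℤ × ℤ)) (w : ℤ × ℤ → ℂ) (x y : K) : IntermediateField ℂ K :=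
  adjoin ℂ {stepEval St w x y}

/-- `k(x) = ℂ(x, S(x,y))`. -/
def kxF (St : Finset (ℤ × ℤ)) (w : ℤ × ℤ → ℂ) (x y : K) : IntermediateField ℂ K :=
  adjoin ℂ {x, stepEval St w x y}

/-- `k(y) = ℂ(y, S(x,y))`. -/
def kyF (St : Finset (ℤ × ℤ)) (w : ℤ × ℤ → ℂ) (x y : K) : IntermediateField ℂ K :=
  adjoin ℂ {y, stepEval St w x y}

/-- `k(x,y) = ℂ(x,y)`. -/
def kxyF (x y : K) : IntermediateField ℂ K := adjoin ℂ {x, y}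

/-- `k(𝒪)`: the subfield generated over `k` by all coordinates of the orbit. -/
def orbitF (St : Finset (ℤ × ℤ)) (w : ℤ × ℤ → ℂ) (x y : K) : IntermediateField ℂ K :=
  adjoin ℂ ({stepEval St w x y} ∪ {z | ∃ a ∈ orbit St w x y, z = a.1 ∨ z = a.2})

/-- The standing hypotheses: nonzero weights, a non-univariate step polynomial,
`x, y` algebraically independent over `ℂ`, and `𝕂` an algebraic closure of `ℂ(x,y)`. -/
structure Setting (St : Finset (ℤ × ℤ)) (w : ℤ × ℤ → ℂ) (x y : K) : Prop where
  weight_ne : ∀ p ∈ St, w p ≠ 0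
  notUniv : NotUnivariate St
  indep : AlgebraicIndependent ℂ ![x, y]
  algClosed : IsAlgClosed K
  algebraic : Algebra.IsAlgebraic (kxyF x y) K

lemma self_mem_orbit (St : Finset (ℤ × ℤ)) (w : ℤ × ℤ → ℂ) (x y : K) :
    (x, y) ∈ orbit St w x y := Relation.ReflTransGen.refl

lemma x_mem_orbitF (St : Finset (ℤ × ℤ)) (w : ℤ × ℤ → ℂ) (x y : K) :
    x ∈ orbitF St w x y := by
  apply subset_adjoin
  exact Set.mem_union_right _ ⟨(x, y), self_mem_orbit St w x y, Or.inl rfl⟩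

lemma y_mem_orbitF (St : Finset (ℤ × ℤ)) (w : ℤ × ℤ → ℂ) (x y : K) :
    y ∈ orbitF St w x y := by
  apply subset_adjoin
  exact Set.mem_union_right _ ⟨(x, y), self_mem_orbit St w x y, Or.inr rfl⟩

lemma S_mem_orbitF (St : Finset (ℤ × ℤ)) (w : ℤ × ℤ → ℂ) (x y : K) :
    stepEval St w x y ∈ orbitF St w x y := by
  apply subset_adjoin
  exact Set.mem_union_left _ rfl

lemma x_mem_kxF (St : Finset (ℤ × ℤ)) (w : ℤ × ℤ → ℂ) (x y : K) :
    x ∈ kxF St w x y :=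
  subset_adjoin ℂ _ (Set.mem_insert _ _)

lemma S_mem_kxF (St : Finset (ℤ × ℤ)) (w : ℤ × ℤ → ℂ) (x y : K) :
    stepEval St w x y ∈ kxF St w x y :=
  subset_adjoin ℂ _ (Set.mem_insert_of_mem _ rfl)

lemma y_mem_kyF (St : Finset (ℤ × ℤ)) (w : ℤ × ℤ → ℂ) (x y : K) :
    y ∈ kyF St w x y :=
  subset_adjoin ℂ _ (Set.mem_insert _ _)

lemma S_mem_kyF (St : Finset (ℤ × ℤ)) (w : ℤ × ℤ → ℂ) (x y : K) :
    stepEval St w x y ∈ kyF St w x y :=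
  subset_adjoin ℂ _ (Set.mem_insert_of_mem _ rfl)

/-- The subgroup of `ℂ`-automorphisms of `M` fixing the subfield `E` pointwise. -/
def fixingAuts (E M : IntermediateField ℂ K) : Subgroup (↥M ≃ₐ[ℂ] ↥M) where
  carrier := {σ | ∀ (z : K) (_ : z ∈ E) (hzM : z ∈ M), σ ⟨z, hzM⟩ = ⟨z, hzM⟩}
  one_mem' := fun _ _ _ => rfl
  mul_mem' := by
    intro σ τ hσ hτ z hzE hzM
    show σ (τ ⟨z, hzM⟩) = ⟨z, hzM⟩
    rw [hτ z hzE hzM, hσ z hzE hzM]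
  inv_mem' := by
    intro σ hσ z hzE hzM
    show σ.symm ⟨z, hzM⟩ = ⟨z, hzM⟩
    conv_lhs => rw [← hσ z hzE hzM]
    exact σ.symm_apply_apply _

/-- The Galois group `G_x = Gal(k(𝒪)|k(x))`. -/
def Gx (St : Finset (ℤ × ℤ)) (w : ℤ × ℤ → ℂ) (x y : K) :
    Subgroup (↥(orbitF St w x y) ≃ₐ[ℂ] ↥(orbitF St w x y)) :=
  fixingAuts (kxF St w x y) (orbitF St w x y)

/-- The Galois group `G_y = Gal(k(𝒪)|k(y))`. -/
def Gy (St : Finset (ℤ × ℤ)) (w : ℤ × ℤ → ℂ) (x y : K) :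
    Subgroup (↥(orbitF St w x y) ≃ₐ[ℂ] ↥(orbitF St w x y)) :=
  fixingAuts (kyF St w x y) (orbitF St w x y)

/-- The Galois group `G_{xy} = Gal(k(𝒪)|k(x,y))`. -/
def Gxy (St : Finset (ℤ × ℤ)) (w : ℤ × ℤ → ℂ) (x y : K) :
    Subgroup (↥(orbitF St w x y) ≃ₐ[ℂ] ↥(orbitF St w x y)) :=
  fixingAuts (kxyF x y) (orbitF St w x y)

/-- Extend an automorphism of an intermediate field to a map on all of `K`
(by the identity outside). -/
def extendAut {M : IntermediateField ℂ K} (σ : ↥M ≃ₐ[ℂ] ↥M) (z : K) : K :=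
  if h : z ∈ M then (σ ⟨z, h⟩ : K) else z

/-- The coordinate-wise action of an automorphism on a `0`-chain. -/
def actChain {M : IntermediateField ℂ K} (σ : ↥M ≃ₐ[ℂ] ↥M)
    (γ : (K × K) →₀ ℂ) : (K × K) →₀ ℂ :=
  Finsupp.mapDomain (Prod.map (extendAut σ) (extendAut σ)) γ

/-- Evaluation of a polynomial `P(X,Y,t)` at `(u, v, 1/S(x,y))` for `(u,v) = a`. -/
def evalPt (St : Finset (ℤ × ℤ)) (w : ℤ × ℤ → ℂ) (x y : K)
    (P : MvPolynomial (Fin 3) ℂ) (a : K × K) : K :=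
  MvPolynomial.aeval ![a.1, a.2, (stepEval St w x y)⁻¹] P

/-- Evaluation of a polynomial `P(X,Y,t)` at `(x, y, 1/S(x,y))`. -/
def evalXY (St : Finset (ℤ × ℤ)) (w : ℤ × ℤ → ℂ) (x y : K)
    (P : MvPolynomial (Fin 3) ℂ) : K :=
  evalPt St w x y P (x, y)

/-- Evaluation of the fraction `A/B` at `(a.1, a.2, 1/S(x,y))`. -/
def fracEval (St : Finset (ℤ × ℤ)) (w : ℤ × ℤ → ℂ) (x y : K)
    (A B : MvPolynomial (Fin 3) ℂ) (a : K × K) : K :=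
  evalPt St w x y A a / evalPt St w x y B a

/-- Evaluation (orbit sum) of the fraction `A/B` on a `0`-chain. -/
def chainEval (St : Finset (ℤ × ℤ)) (w : ℤ × ℤ → ℂ) (x y : K)
    (A B : MvPolynomial (Fin 3) ℂ) (γ : (K × K) →₀ ℂ) : K :=
  γ.sum fun a c => algebraMap ℂ K c * fracEval St w x y A B a

/-- A `0`-chain cancels decoupled fractions: the orbit sum of every regular fraction
of the form `F(X,t) + G(Y,t)` on it vanishes. -/
def CancelsDecoupled (St : Finset (ℤ × ℤ)) (w : ℤ × ℤ → ℂ) (mx my : ℕ)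
    (x y : K) (α : (K × K) →₀ ℂ) : Prop :=
  ∀ A₁ B₁ A₂ B₂ : MvPolynomial (Fin 3) ℂ,
    A₁ ∈ MvPolynomial.supported ℂ ({0, 2} : Set (Fin 3)) →
    B₁ ∈ MvPolynomial.supported ℂ ({0, 2} : Set (Fin 3)) →
    A₂ ∈ MvPolynomial.supported ℂ ({1, 2} : Set (Fin 3)) →
    B₂ ∈ MvPolynomial.supported ℂ ({1, 2} : Set (Fin 3)) →
    ¬ kernelPoly St w mx my ∣ B₁ → ¬ kernelPoly St w mx my ∣ B₂ →
    (α.sum fun a c =>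
      algebraMap ℂ K c * (fracEval St w x y A₁ B₁ a + fracEval St w x y A₂ B₂ a)) = 0

/-- The field of fractions `ℂ(X,Y,t)`. -/
abbrev FF : Type := FractionRing (MvPolynomial (Fin 3) ℂ)

/-- The inclusion of `ℂ[X,Y,t]` into `ℂ(X,Y,t)`. -/
def toFF (P : MvPolynomial (Fin 3) ℂ) : FF := algebraMap (MvPolynomial (Fin 3) ℂ) FF P

/-- The regular fraction `A/B` admits a Galois decoupling:
`A/B = F + G + K̃·R` with `F ∈ ℂ(X,t)`, `G ∈ ℂ(Y,t)` and `R` regular. -/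
def AdmitsDecoupling (St : Finset (ℤ × ℤ)) (w : ℤ × ℤ → ℂ) (mx my : ℕ)
    (A B : MvPolynomial (Fin 3) ℂ) : Prop :=
  ∃ F₁ F₂ G₁ G₂ R₁ R₂ : MvPolynomial (Fin 3) ℂ,
    F₁ ∈ MvPolynomial.supported ℂ ({0, 2} : Set (Fin 3)) ∧
    F₂ ∈ MvPolynomial.supported ℂ ({0, 2} : Set (Fin 3)) ∧
    G₁ ∈ MvPolynomial.supported ℂ ({1, 2} : Set (Fin 3)) ∧
    G₂ ∈ MvPolynomial.supported ℂ ({1, 2} : Set (Fin 3)) ∧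
    ¬ kernelPoly St w mx my ∣ F₂ ∧ ¬ kernelPoly St w mx my ∣ G₂ ∧
    ¬ kernelPoly St w mx my ∣ R₂ ∧
    toFF A / toFF B =
      toFF F₁ / toFF F₂ + toFF G₁ / toFF G₂ +
        toFF (kernelPoly St w mx my) * (toFF R₁ / toFF R₂)

/-- `(I, J) = (A/B, Cc/D)` is a pair of Galois invariants: `I - J = K̃·R` with `R` regular. -/
def IsInvariantPair (St : Finset (ℤ × ℤ)) (w : ℤ × ℤ → ℂ) (mx my : ℕ)
    (A B Cc D : MvPolynomial (Fin 3) ℂ) : Prop :=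
  ∃ R₁ R₂ : MvPolynomial (Fin 3) ℂ, ¬ kernelPoly St w mx my ∣ R₂ ∧
    toFF A / toFF B - toFF Cc / toFF D =
      toFF (kernelPoly St w mx my) * (toFF R₁ / toFF R₂)

/-- A constant pair of Galois invariants: both members are equivalent to a
common fraction `c ∈ ℂ(t)` modulo `K̃`. -/
def IsConstantPair (St : Finset (ℤ × ℤ)) (w : ℤ × ℤ → ℂ) (mx my : ℕ)
    (A B Cc D : MvPolynomial (Fin 3) ℂ) : Prop :=
  IsInvariantPair St w mx my A B Cc D ∧
  ∃ c₁ c₂ : MvPolynomial (Fin 3) ℂ,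
    c₁ ∈ MvPolynomial.supported ℂ ({2} : Set (Fin 3)) ∧
    c₂ ∈ MvPolynomial.supported ℂ ({2} : Set (Fin 3)) ∧ c₂ ≠ 0 ∧
    IsInvariantPair St w mx my A B c₁ c₂ ∧ IsInvariantPair St w mx my Cc D c₁ c₂

/-- `(γx, γy)` is a pseudo-decoupling of `(x,y)`. -/
def PseudoDecoupling (St : Finset (ℤ × ℤ)) (w : ℤ × ℤ → ℂ) (mx my : ℕ)
    (x y : K) (γx γy : (K × K) →₀ ℂ) : Prop :=
  ∀ A B : MvPolynomial (Fin 3) ℂ, ¬ kernelPoly St w mx my ∣ B →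
    AdmitsDecoupling St w mx my A B →
      fracEval St w x y A B (x, y) =
          chainEval St w x y A B γx + chainEval St w x y A B γy ∧
        chainEval St w x y A B γx ∈ kxF St w x y ∧
        chainEval St w x y A B γy ∈ kyF St w x y

/-- `(gx, gy, a)` is a decoupling of `(x,y)` in the orbit. -/
def IsDecoupling (St : Finset (ℤ × ℤ)) (w : ℤ × ℤ → ℂ) (mx my : ℕ)
    (x y : K) (gx gy a : (K × K) →₀ ℂ) : Prop :=
  Finsupp.single (x, y) (1 : ℂ) = gx + gy + a ∧
  (∀ σ ∈ Gx St w x y, actChain σ gx = gx) ∧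
  (∀ σ ∈ Gy St w x y, actChain σ gy = gy) ∧
  CancelsDecoupled St w mx my x y a

/-- The `x`-part of the boundary of a `1`-chain. -/
def boundaryX (St : Finset (ℤ × ℤ)) (w : ℤ × ℤ → ℂ)
    (c : ((K × K) × (K × K)) →₀ ℂ) : (K × K) →₀ ℂ :=
  c.sum fun e coeff =>
    if XAdj St w e.1 e.2 then
      coeff • (Finsupp.single e.2 (1 : ℂ) - Finsupp.single e.1 (1 : ℂ)) else 0

/-- The `y`-part of the boundary of a `1`-chain. -/
def boundaryY (St : Finset (ℤ × ℤ)) (w : ℤ × ℤ → ℂ)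
    (c : ((K × K) × (K × K)) →₀ ℂ) : (K × K) →₀ ℂ :=
  c.sum fun e coeff =>
    if YAdj St w e.1 e.2 then
      coeff • (Finsupp.single e.2 (1 : ℂ) - Finsupp.single e.1 (1 : ℂ)) else 0

/-- The `0`-chain induced by a bicolored loop. -/
def IsBicoloredChain (St : Finset (ℤ × ℤ)) (w : ℤ × ℤ → ℂ) (x y : K)
    (α : (K × K) →₀ ℂ) : Prop :=
  ∃ (n : ℕ) (b : ℕ → K × K), 0 < n ∧ b (2 * n) = b 0 ∧
    (∀ j < 2 * n, b j ∈ orbit St w x y) ∧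
    (∀ i < n, XAdj St w (b (2 * i)) (b (2 * i + 1)) ∧
      YAdj St w (b (2 * i + 1)) (b (2 * i + 2))) ∧
    α = ∑ j ∈ Finset.range (2 * n), ((-1 : ℂ) ^ (j + 1)) • Finsupp.single (b j) (1 : ℂ)

/-- The `0`-chain `ω = (1/|𝒪|) ∑_{a ∈ 𝒪} a`. -/
def omegaChain (St : Finset (ℤ × ℤ)) (w : ℤ × ℤ → ℂ) (x y : K)
    (h : (orbit St w x y).Finite) : (K × K) →₀ ℂ :=
  ((h.toFinset.card : ℂ))⁻¹ • ∑ a ∈ h.toFinset, Finsupp.single a (1 : ℂ)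

/-- The average `[G]·γ = (1/|G|) ∑_{σ ∈ G} σ·γ` of a `0`-chain under a group. -/
def groupAverage {M : IntermediateField ℂ K} (G : Subgroup (↥M ≃ₐ[ℂ] ↥M))
    (γ : (K × K) →₀ ℂ) : (K × K) →₀ ℂ :=
  ((Nat.card G : ℂ))⁻¹ • ∑ᶠ σ ∈ (G : Set (↥M ≃ₐ[ℂ] ↥M)), actChain σ γ

/-- `ℂ[X,t]` (two variables: `0` and `1`). -/
abbrev MvP2 : Type := MvPolynomial (Fin 2) ℂ

/-- `ℂ(X,t)`, the fraction field of `ℂ[X,t]`. -/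
abbrev CXt : Type := FractionRing MvP2

/-- Constants `ℂ → ℂ(X,t)`. -/
def cconst : ℂ →+* CXt := (algebraMap MvP2 CXt).comp (MvPolynomial.C)

/-- The first generator of `ℂ(X,t)`. -/
def gen0 : CXt := algebraMap MvP2 CXt (MvPolynomial.X 0)

/-- The second generator of `ℂ(X,t)`. -/
def gen1 : CXt := algebraMap MvP2 CXt (MvPolynomial.X 1)

/-- The kernel polynomial viewed as a polynomial in `Y` over `ℂ(X,t)`. -/
def kernelInY (St : Finset (ℤ × ℤ)) (w : ℤ × ℤ → ℂ) (mx my : ℕ) :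
    Polynomial CXt :=
  MvPolynomial.eval₂ ((Polynomial.C : CXt →+* Polynomial CXt).comp cconst)
    ![Polynomial.C gen0, Polynomial.X, Polynomial.C gen1]
    (kernelPoly St w mx my)

/-- The kernel polynomial viewed as a polynomial in `X` over `ℂ(Y,t)`. -/
def kernelInX (St : Finset (ℤ × ℤ)) (w : ℤ × ℤ → ℂ) (mx my : ℕ) :
    Polynomial CXt :=
  MvPolynomial.eval₂ ((Polynomial.C : CXt →+* Polynomial CXt).comp cconst)
    ![Polynomial.X, Polynomial.C gen0, Polynomial.C gen1]
    (kernelPoly St w mx my)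

/-- The kernel polynomial viewed as a polynomial in `X, Y` over `ℂ(t)`. -/
def kernelInXY (St : Finset (ℤ × ℤ)) (w : ℤ × ℤ → ℂ) (mx my : ℕ) :
    MvPolynomial (Fin 2) (RatFunc ℂ) :=
  MvPolynomial.eval₂
    ((MvPolynomial.C : RatFunc ℂ →+* MvPolynomial (Fin 2) (RatFunc ℂ)).comp
      (RatFunc.C : ℂ →+* RatFunc ℂ))
    ![MvPolynomial.X 0, MvPolynomial.X 1, MvPolynomial.C RatFunc.X]
    (kernelPoly St w mx my)

/-- The specialization `K̃(x, Y, 1/S(x,y))` as a polynomial in `Y` over `k(x)`. -/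
def kernelAtX (St : Finset (ℤ × ℤ)) (w : ℤ × ℤ → ℂ) (mx my : ℕ) (x y : K) :
    Polynomial ↥(kxF St w x y) :=
  MvPolynomial.aeval
    ![Polynomial.C (⟨x, x_mem_kxF St w x y⟩ : kxF St w x y), Polynomial.X,
      Polynomial.C (⟨(stepEval St w x y)⁻¹, inv_mem (S_mem_kxF St w x y)⟩ : kxF St w x y)]
    (kernelPoly St w mx my)

/-- The specialization `K̃(X, y, 1/S(x,y))` as a polynomial in `X` over `k(y)`. -/
def kernelAtY (St : Finset (ℤ × ℤ)) (w : ℤ × ℤ → ℂ) (mx my : ℕ) (x y : K) :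
    Polynomial ↥(kyF St w x y) :=
  MvPolynomial.aeval
    ![Polynomial.X, Polynomial.C (⟨y, y_mem_kyF St w x y⟩ : kyF St w x y),
      Polynomial.C (⟨(stepEval St w x y)⁻¹, inv_mem (S_mem_kyF St w x y)⟩ : kyF St w x y)]
    (kernelPoly St w mx my)

/-- Values of regular fractions with numerator and denominator supported on a set
of variables. -/
def regRange (St : Finset (ℤ × ℤ)) (w : ℤ × ℤ → ℂ) (x y : K) (mx my : ℕ)
    (s : Set (Fin 3)) : Set K :=
  {z | ∃ A B : MvPolynomial (Fin 3) ℂ,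
    A ∈ MvPolynomial.supported ℂ s ∧ B ∈ MvPolynomial.supported ℂ s ∧
    ¬ kernelPoly St w mx my ∣ B ∧ z = evalXY St w x y A / evalXY St w x y B}

end QuadrantWalk
namespace QuadrantWalk

/-- The integer powers of a transcendental element are linearly independent. -/
lemma coeff_eq_zero_of_sum_zpow_eq_zero {F K : Type*} [Field F] [Field K] [Algebra F K] {t : K}
    (ht : Transcendental F t) (A : Finset ℤ) (c : ℤ → F)
    (h : ∑ n ∈ A, algebraMap F K (c n) * t ^ n = 0) : ∀ n ∈ A, c n = 0 := by
  obtain ⟨N, hN⟩ : ∃ N : ℕ, ∀ n ∈ A, 0 ≤ n + N := by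
    refine ⟨∑ m ∈ A, m.natAbs, fun n hn => ?_⟩
    have := Finset.single_le_sum (f := Int.natAbs) (fun i _ => Nat.zero_le _) hn
    omega
  have ht0 : t ≠ 0 := fun h0 => ht (h0 ▸ isAlgebraic_zero)
  have hp : ∑ n ∈ A, Polynomial.monomial (n + N).toNat (c n) = 0 := by
    by_contra hne
    refine ht ⟨_, hne, ?_⟩
    have : ∀ n ∈ A, Polynomial.aeval t (Polynomial.monomial (n + N).toNat (c n)) =
        (algebraMap F K (c n) * t ^ n) * t ^ N := by
      intro n hn
      rw [Polynomial.aeval_monomial, ← zpow_natCast, ← zpow_natCast, mul_assoc,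
        ← zpow_add₀ ht0, Int.toNat_of_nonneg (hN n hn)]
    rw [map_sum, Finset.sum_congr rfl this, ← Finset.sum_mul, h, zero_mul]
  intro n hn
  have := congrArg (fun p => p.coeff (n + N).toNat) hp
  simp only [Polynomial.finsetSum_coeff, Polynomial.coeff_monomial, Polynomial.coeff_zero] at this
  rwa [Finset.sum_eq_single_of_mem n hn, if_pos rfl] at this
  intro b hb hbn
  refine if_neg fun he => hbn ?_
  have := hN b hb
  have := hN n hn
  omega

/-- The value `S(u,v)` is compatible with algebra homomorphisms. -/
lemma map_stepEval {K L : Type} [Field K] [Algebra ℂ K] [Field L] [Algebra ℂ L]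
    (φ : K →ₐ[ℂ] L) (St : Finset (ℤ × ℤ)) (w : ℤ × ℤ → ℂ) (u v : K) :
    φ (stepEval St w u v) = stepEval St w (φ u) (φ v) := by
  simp [stepEval]

lemma algebraicIndependent_pair_iff {F K : Type*} [Field F] [Field K] [Algebra F K] (x y : K) :
    AlgebraicIndependent F ![x, y] ↔
      Transcendental F x ∧ Transcendental (adjoin F {x}) y := by
  rw [AlgebraicIndependent.iff_transcendental_adjoin_image (1 : Fin 2),
    IntermediateField.transcendental_adjoin_iff]
  have h1 : (![x, y] '' {1}ᶜ) = {x} := by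
    have : ({1}ᶜ : Set (Fin 2)) = {0} := by ext i; fin_cases i <;> simp
    rw [this]; simp
  have h2 : AlgebraicIndependent F (fun j : {j : Fin 2 // j ≠ 1} => ![x, y] j) ↔
      Transcendental F x := by
    have : Subsingleton {j : Fin 2 // j ≠ 1} := ⟨by
      rintro ⟨a, ha⟩ ⟨b, hb⟩; ext; simp; omega⟩
    rw [algebraicIndependent_singleton_iff ⟨0, by decide⟩]
    rfl
  rw [h1, h2]
  rfl

/-- If `x, y` are algebraically independent and `S` involves `Y`, then so are `x, S(x,y)`. -/
lemma transcendental_stepEval {K : Type} [Field K] [Algebra ℂ K]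
    (St : Finset (ℤ × ℤ)) (w : ℤ × ℤ → ℂ) (x y : K) (hw : ∀ p ∈ St, w p ≠ 0)
    (hSt : ∃ p ∈ St, p.2 ≠ 0) (hx : Transcendental ℂ x)
    (hy : Transcendental (adjoin ℂ {x}) y) :
    Transcendental (adjoin ℂ {x}) (stepEval St w x y) := by
  intro hs
  obtain ⟨p, hp, hp2⟩ := hSt
  let L := algebraicClosure (adjoin ℂ {x}) K
  let xL : L := algebraMap (adjoin ℂ {x}) L ⟨x, subset_adjoin ℂ _ rfl⟩
  let sL : L := ⟨stepEval St w x y, mem_algebraicClosure_iff.2 hs⟩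
  let e (q : ℤ × ℤ) : L := algebraMap (adjoin ℂ {x}) L (algebraMap ℂ _ (w q)) * xL ^ q.1
  let c (j : ℤ) : L := ∑ q ∈ St with q.2 = j, e q
  have he (q : ℤ × ℤ) : algebraMap L K (e q) = algebraMap ℂ K (w q) * x ^ q.1 := by
    simp only [e, map_mul, map_zpow₀]
    rfl
  have hsum : ∑ j ∈ insert 0 (St.image Prod.snd),
      algebraMap L K (c j - if j = 0 then sL else 0) * y ^ j = 0 := by
    simp only [map_sub, sub_mul, Finset.sum_sub_distrib, sub_eq_zero]
    have hs0 : ∑ j ∈ insert 0 (St.image Prod.snd),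
        algebraMap L K (if j = 0 then sL else 0) * y ^ j = stepEval St w x y := by
      rw [Finset.sum_eq_single_of_mem (0 : ℤ) (Finset.mem_insert_self _ _)
        (fun b _ hb => by simp [hb]), if_pos rfl, zpow_zero, mul_one]
      rfl
    rw [hs0]
    rw [stepEval, ← Finset.sum_fiberwise_of_maps_to (g := Prod.snd)
      (t := insert 0 (St.image Prod.snd))
      (fun q hq => Finset.mem_insert_of_mem (Finset.mem_image_of_mem _ hq))]
    refine Finset.sum_congr rfl fun j _ => ?_
    rw [map_sum, Finset.sum_mul]
    refine Finset.sum_congr rfl fun q hq => ?_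
    rw [he, (Finset.mem_filter.1 hq).2]
  have hc := coeff_eq_zero_of_sum_zpow_eq_zero hy.algebraicClosure _ _ hsum p.2
    (Finset.mem_insert_of_mem (Finset.mem_image_of_mem _ hp))
  rw [if_neg hp2, sub_zero] at hc
  have hc' : ∑ n ∈ (St.filter fun q => q.2 = p.2).image Prod.fst,
      algebraMap ℂ K (w (n, p.2)) * x ^ n = 0 := by
    rw [Finset.sum_image]
    · rw [← map_zero (algebraMap L K), ← hc, map_sum]
      refine Finset.sum_congr rfl fun q hq => ?_
      rw [he, ← (Finset.mem_filter.1 hq).2]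
    · intro a ha b hb hab
      exact Prod.ext hab ((Finset.mem_filter.1 ha).2.trans (Finset.mem_filter.1 hb).2.symm)
  exact hw p hp (coeff_eq_zero_of_sum_zpow_eq_zero hx _ (fun n => w (n, p.2)) hc' p.1
    (Finset.mem_image_of_mem _ (Finset.mem_filter.2 ⟨hp, rfl⟩)))

/-- If `S(x,v)` is transcendental over `ℂ(x)`, then so is `v`. -/
lemma transcendental_of_stepEval {K : Type} [Field K] [Algebra ℂ K]
    (St : Finset (ℤ × ℤ)) (w : ℤ × ℤ → ℂ) (x v : K)
    (h : Transcendental (adjoin ℂ {x}) (stepEval St w x v)) :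
    Transcendental (adjoin ℂ {x}) v := by
  intro hv
  let L := algebraicClosure (adjoin ℂ {x}) K
  have hvL : v ∈ L := mem_algebraicClosure_iff.2 hv
  have hF (z : K) (hz : z ∈ adjoin ℂ {x}) : z ∈ L :=
    L.algebraMap_mem (⟨z, hz⟩ : adjoin ℂ {x})
  refine h (mem_algebraicClosure_iff.1 (sum_mem fun p _ => ?_))
  exact mul_mem (mul_mem (hF _ (IntermediateField.algebraMap_mem _ _))
    (zpow_mem (hF _ (subset_adjoin ℂ _ rfl)) _)) (zpow_mem hvL _)

/-- Two transcendence bases indexed by the same type are conjugate under an automorphism. -/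
lemma exists_algEquiv_of_isTranscendenceBasis {ι F K : Type*} [Field F] [Field K] [Algebra F K]
    [IsAlgClosed K] {u v : ι → K} (hu : IsTranscendenceBasis F u) (hv : IsTranscendenceBasis F v) :
    ∃ φ : K ≃ₐ[F] K, ∀ i, φ (u i) = v i := by
  have := IsAlgClosed.isAlgClosure_of_transcendence_basis u hu
  have := IsAlgClosed.isAlgClosure_of_transcendence_basis v hv
  let e := hu.1.aevalEquiv.symm.trans hv.1.aevalEquiv
  let φ := IsAlgClosure.equivOfEquiv K K e.toRingEquiv
  have hφ (z : Algebra.adjoin F (Set.range u)) : φ z = e z :=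
    IsAlgClosure.equivOfEquiv_algebraMap K K e.toRingEquiv z
  refine ⟨AlgEquiv.ofRingEquiv (f := φ) fun r => ?_, fun i => ?_⟩
  · have := hφ (algebraMap F _ r)
    rw [e.commutes] at this
    exact this
  · have h1 : (⟨u i, Algebra.subset_adjoin ⟨i, rfl⟩⟩ : Algebra.adjoin F (Set.range u)) =
        hu.1.aevalEquiv (MvPolynomial.X i) := Subtype.ext (by simp)
    have := hφ ⟨u i, Algebra.subset_adjoin ⟨i, rfl⟩⟩
    rw [h1] at this
    simpa [e] using this

/-- A pair `(x,v)` that is `x`-adjacent to `(x,y)` is conjugate to `(x,y)`. -/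
lemma exists_algEquiv_of_stepEval_eq {K : Type} [Field K] [Algebra ℂ K] [IsAlgClosed K]
    (St : Finset (ℤ × ℤ)) (w : ℤ × ℤ → ℂ) (x y v : K) (hw : ∀ p ∈ St, w p ≠ 0)
    (hSt : ∃ p ∈ St, p.2 ≠ 0) (hxy : AlgebraicIndependent ℂ ![x, y])
    (halg : Algebra.IsAlgebraic (adjoin ℂ {x, y}) K)
    (hv : stepEval St w x y = stepEval St w x v) :
    ∃ φ : K ≃ₐ[ℂ] K, φ x = x ∧ φ y = v := by
  obtain ⟨hx, hy⟩ := (algebraicIndependent_pair_iff x y).1 hxy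
  have hxv : AlgebraicIndependent ℂ ![x, v] := (algebraicIndependent_pair_iff x v).2
    ⟨hx, transcendental_of_stepEval St w x v
      (hv ▸ transcendental_stepEval St w x y hw hSt hx hy)⟩
  have hb : IsTranscendenceBasis ℂ ![x, y] := by
    rw [hxy.isTranscendenceBasis_iff_isAlgebraic, ← isAlgebraic_adjoin_iff_top]
    rwa [Matrix.range_cons_cons_empty]
  have hb' : IsTranscendenceBasis ℂ ![x, v] :=
    hxv.isTranscendenceBasis_of_trdeg_le_of_finite hb.cardinalMk_eq_trdeg.symm.le
  obtain ⟨φ, hφ⟩ := exists_algEquiv_of_isTranscendenceBasis hb hb'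
  exact ⟨φ, hφ 0, hφ 1⟩

/-- Algebra homomorphisms preserve and reflect adjacency. -/
lemma adj_map_iff {K L : Type} [Field K] [Algebra ℂ K] [Field L] [Algebra ℂ L]
    {St : Finset (ℤ × ℤ)} {w : ℤ × ℤ → ℂ} (φ : K →ₐ[ℂ] L) {a b : K × K} :
    Adj St w (Prod.map φ φ a) (Prod.map φ φ b) ↔ Adj St w a b := by
  have hφ : Function.Injective φ := φ.toRingHom.injective
  simp only [Adj, XAdj, YAdj, Prod.map_fst, Prod.map_snd, ← map_stepEval, hφ.eq_iff]

lemma Adj.symm {K : Type} [Field K] [Algebra ℂ K] {St : Finset (ℤ × ℤ)} {w : ℤ × ℤ → ℂ}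
    {a b : K × K} (h : Adj St w a b) : Adj St w b a :=
  h.imp (fun h => ⟨h.1.symm, h.2.symm⟩) (fun h => ⟨h.1.symm, h.2.symm⟩)

lemma stepEval_swap {K : Type} [Field K] [Algebra ℂ K] (St : Finset (ℤ × ℤ)) (w : ℤ × ℤ → ℂ)
    (u v : K) :
    stepEval (St.map (Equiv.prodComm ℤ ℤ).toEmbedding) (w ∘ Prod.swap) v u = stepEval St w u v := by
  simp [stepEval, mul_right_comm]

/-- A homomorphism sending `(x,y)` into the orbit preserves `k(𝒪)`. -/
lemma orbitF_map_le {K : Type} [Field K] [Algebra ℂ K] (St : Finset (ℤ × ℤ)) (w : ℤ × ℤ → ℂ)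
    (x y : K) (φ : K →ₐ[ℂ] K) (h : (φ x, φ y) ∈ orbit St w x y) :
    (orbitF St w x y).map φ ≤ orbitF St w x y := by
  have horb {a : K × K} (ha : a ∈ orbit St w x y) :
      Prod.map φ φ a ∈ orbit St w x y := by
    refine Relation.ReflTransGen.trans h ?_
    exact Relation.ReflTransGen.lift (Prod.map φ φ) (fun _ _ => (adj_map_iff φ).2) (x, y) a ha
  rw [orbitF, IntermediateField.adjoin_map, adjoin_le_iff]
  rintro _ ⟨z, rfl | ⟨a, ha, rfl | rfl⟩, rfl⟩
  · change φ _ ∈ orbitF St w x y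
    rw [map_stepEval]
    refine sum_mem fun p _ => mul_mem
      (mul_mem (IntermediateField.algebraMap_mem _ _) (zpow_mem ?_ _)) (zpow_mem ?_ _) <;> refine subset_adjoin _ _ (Or.inr ⟨_, h, ?_⟩)
    exacts [Or.inl rfl, Or.inr rfl]
  · exact subset_adjoin _ _ (Or.inr ⟨_, horb ha, Or.inl rfl⟩)
  · exact subset_adjoin _ _ (Or.inr ⟨_, horb ha, Or.inr rfl⟩)

/-- An automorphism `φ` such that `φ (x,y)` is adjacent to `(x,y)` restricts to `k(𝒪)`. -/
lemma exists_restrict_orbitF {K : Type} [Field K] [Algebra ℂ K] (St : Finset (ℤ × ℤ))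
    (w : ℤ × ℤ → ℂ) (x y : K) (φ : K ≃ₐ[ℂ] K) (h : Adj St w (x, y) (φ x, φ y)) :
    ∃ σ : orbitF St w x y ≃ₐ[ℂ] orbitF St w x y, ∀ z : orbitF St w x y, (σ z : K) = φ z := by
  have h' : Adj St w (x, y) (φ.symm x, φ.symm y) := by
    have := ((adj_map_iff φ.symm.toAlgHom).2 h).symm
    change Adj St w (φ.symm (φ x), φ.symm (φ y)) (φ.symm x, φ.symm y) at this
    rwa [φ.symm_apply_apply, φ.symm_apply_apply] at this
  have heq : (orbitF St w x y).map φ.toAlgHom = orbitF St w x y := by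
    refine le_antisymm (orbitF_map_le St w x y _ (.single h)) fun z hz => ?_
    exact ⟨φ.symm z, orbitF_map_le St w x y φ.symm.toAlgHom (.single h') ⟨z, hz, rfl⟩,
      φ.apply_symm_apply z⟩
  exact ⟨(intermediateFieldMap φ _).trans (equivOfEq heq), fun z => rfl⟩

lemma mem_fixingAuts_adjoin {K : Type} [Field K] [Algebra ℂ K] (M : IntermediateField ℂ K)
    (φ : K →ₐ[ℂ] K) (σ : M ≃ₐ[ℂ] M) (hσ : ∀ z : M, (σ z : K) = φ z) (A : Set K)
    (hA : ∀ z ∈ A, φ z = z) : σ ∈ fixingAuts (adjoin ℂ A) M := by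
  intro z hz hzM
  refine Subtype.ext ((hσ _).trans ?_)
  change φ z = z
  clear hzM
  induction hz using adjoin_induction with
  | mem z hz => exact hA z hz
  | algebraMap r => exact φ.commutes r
  | add a b _ _ ha hb => rw [map_add, ha, hb]
  | inv a _ ha => rw [map_inv₀, ha]
  | mul a b _ _ ha hb => rw [map_mul, ha, hb]

/-- A pair `x`-adjacent to `(x,y)` is the image of `(x,y)` under an element of `G_x`. -/
lemma exists_mem_Gx_of_XAdj {K : Type} [Field K] [Algebra ℂ K] {St : Finset (ℤ × ℤ)}
    {w : ℤ × ℤ → ℂ} {x y : K} (hset : Setting St w x y) {b : K × K}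
    (hb : XAdj St w (x, y) b) :
    ∃ σ ∈ Gx St w x y, ((σ ⟨x, x_mem_orbitF St w x y⟩ : orbitF St w x y) : K) = b.1 ∧
      ((σ ⟨y, y_mem_orbitF St w x y⟩ : orbitF St w x y) : K) = b.2 := by
  obtain ⟨u, v⟩ := b
  obtain ⟨rfl : x = u, hv : stepEval St w x y = stepEval St w x v⟩ := hb
  have := hset.algClosed
  have hSt : ∃ p ∈ St, p.2 ≠ 0 := by
    obtain ⟨p, hp, q, hq, hpq⟩ := hset.notUniv.2
    by_cases h : p.2 = 0
    exacts [⟨q, hq, fun h' => hpq (h.trans h'.symm)⟩, ⟨p, hp, h⟩]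
  obtain ⟨φ, hφx, hφy⟩ := exists_algEquiv_of_stepEval_eq St w x y v hset.weight_ne hSt
    hset.indep hset.algebraic hv
  have hφs : φ (stepEval St w x y) = stepEval St w x y :=
    (map_stepEval φ.toAlgHom St w x y).trans (by simp [hφx, hφy, hv])
  obtain ⟨σ, hσ⟩ := exists_restrict_orbitF St w x y φ
    (by rw [hφx, hφy]; exact Or.inl ⟨rfl, hv⟩)
  refine ⟨σ, mem_fixingAuts_adjoin _ φ.toAlgHom σ hσ _ ?_, (hσ _).trans hφx, (hσ _).trans hφy⟩
  rintro z (rfl | rfl)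
  exacts [hφx, hφs]

/-- A pair `y`-adjacent to `(x,y)` is the image of `(x,y)` under an element of `G_y`. -/
lemma exists_mem_Gy_of_YAdj {K : Type} [Field K] [Algebra ℂ K] {St : Finset (ℤ × ℤ)}
    {w : ℤ × ℤ → ℂ} {x y : K} (hset : Setting St w x y) {b : K × K}
    (hb : YAdj St w (x, y) b) :
    ∃ σ ∈ Gy St w x y, ((σ ⟨x, x_mem_orbitF St w x y⟩ : orbitF St w x y) : K) = b.1 ∧
      ((σ ⟨y, y_mem_orbitF St w x y⟩ : orbitF St w x y) : K) = b.2 := by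
  obtain ⟨u, v⟩ := b
  obtain ⟨rfl : y = v, hu : stepEval St w x y = stepEval St w u y⟩ := hb
  have := hset.algClosed
  have hSt : ∃ p ∈ St, p.1 ≠ 0 := by
    obtain ⟨p, hp, q, hq, hpq⟩ := hset.notUniv.1
    by_cases h : p.1 = 0
    exacts [⟨q, hq, fun h' => hpq (h.trans h'.symm)⟩, ⟨p, hp, h⟩]
  have hind : AlgebraicIndependent ℂ ![y, x] := by
    convert hset.indep.comp (Equiv.swap 0 1) (Equiv.injective _) using 1
    ext i
    fin_cases i <;> rfl
  obtain ⟨φ, hφy, hφx⟩ := exists_algEquiv_of_stepEval_eq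
    (St.map (Equiv.prodComm ℤ ℤ).toEmbedding) (w ∘ Prod.swap) y x u
    (by simpa using fun a b h => hset.weight_ne (b, a) h)
    (by obtain ⟨q, hq, hq1⟩ := hSt; exact ⟨q.swap, by simpa using hq, hq1⟩) hind
    (by rw [Set.pair_comm]; exact hset.algebraic) (by rwa [stepEval_swap, stepEval_swap])
  have hφs : φ (stepEval St w x y) = stepEval St w x y :=
    (map_stepEval φ.toAlgHom St w x y).trans (by simp [hφx, hφy, hu])
  obtain ⟨σ, hσ⟩ := exists_restrict_orbitF St w x y φ
    (by rw [hφx, hφy]; exact Or.inr ⟨rfl, hu⟩)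
  refine ⟨σ, mem_fixingAuts_adjoin _ φ.toAlgHom σ hσ _ ?_, (hσ _).trans hφx, (hσ _).trans hφy⟩
  rintro z (rfl | rfl)
  exacts [hφy, hφs]

/-- Automorphisms in the same left coset of `G_{xy}` agree on `x` and `y`. -/
lemma eq_of_inv_mul_mem_Gxy {K : Type} [Field K] [Algebra ℂ K] {St : Finset (ℤ × ℤ)}
    {w : ℤ × ℤ → ℂ} {x y : K} {σ τ : orbitF St w x y ≃ₐ[ℂ] orbitF St w x y}
    (h : σ⁻¹ * τ ∈ Gxy St w x y) :
    τ ⟨x, x_mem_orbitF St w x y⟩ = σ ⟨x, x_mem_orbitF St w x y⟩ ∧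
      τ ⟨y, y_mem_orbitF St w x y⟩ = σ ⟨y, y_mem_orbitF St w x y⟩ := by
  have key (z : K) (hz : z ∈ ({x, y} : Set K)) (hzM : z ∈ orbitF St w x y) :
      τ ⟨z, hzM⟩ = σ ⟨z, hzM⟩ :=
    (AlgEquiv.symm_apply_eq σ).1 (h z (subset_adjoin ℂ _ hz) hzM)
  exact ⟨key x (Or.inl rfl) _, key y (Or.inr rfl) _⟩

/-- for any systems of representatives `I_x`, `I_y` of the left cosets
of `G_{xy}` in `G_x`, resp. `G_y`, the subgroup generated by `I_x ∪ I_y` acts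
transitively on the orbit. -/
theorem stmt7 {K : Type} [Field K] [Algebra ℂ K]
    (St : Finset (ℤ × ℤ)) (w : ℤ × ℤ → ℂ) (x y : K)
    (hset : Setting St w x y)
    (Ix Iy : Set (↥(orbitF St w x y) ≃ₐ[ℂ] ↥(orbitF St w x y)))
    (hIx : Ix ⊆ (Gx St w x y : Set (↥(orbitF St w x y) ≃ₐ[ℂ] ↥(orbitF St w x y))))
    (hIx' : ∀ σ ∈ Gx St w x y, ∃! τ, τ ∈ Ix ∧ σ⁻¹ * τ ∈ Gxy St w x y)
    (hIy : Iy ⊆ (Gy St w x y : Set (↥(orbitF St w x y) ≃ₐ[ℂ] ↥(orbitF St w x y))))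
    (hIy' : ∀ σ ∈ Gy St w x y, ∃! τ, τ ∈ Iy ∧ σ⁻¹ * τ ∈ Gxy St w x y) :
    ∀ a ∈ orbit St w x y, ∃ σ ∈ Subgroup.closure (Ix ∪ Iy),
      ((σ ⟨x, x_mem_orbitF St w x y⟩ : orbitF St w x y) : K) = a.1 ∧
      ((σ ⟨y, y_mem_orbitF St w x y⟩ : orbitF St w x y) : K) = a.2 := by
  have adj_self {b : K × K} (hb : Adj St w (x, y) b) :
      ∃ τ ∈ Subgroup.closure (Ix ∪ Iy),
        ((τ ⟨x, x_mem_orbitF St w x y⟩ : orbitF St w x y) : K) = b.1 ∧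
        ((τ ⟨y, y_mem_orbitF St w x y⟩ : orbitF St w x y) : K) = b.2 := by
    rcases hb with hb | hb
    · obtain ⟨σ, hσ, hσx, hσy⟩ := exists_mem_Gx_of_XAdj hset hb
      obtain ⟨τ, ⟨hτ, hστ⟩, -⟩ := hIx' σ hσ
      obtain ⟨h1, h2⟩ := eq_of_inv_mul_mem_Gxy hστ
      exact ⟨τ, Subgroup.subset_closure (Or.inl hτ), by rw [h1, hσx], by rw [h2, hσy]⟩
    · obtain ⟨σ, hσ, hσx, hσy⟩ := exists_mem_Gy_of_YAdj hset hb
      obtain ⟨τ, ⟨hτ, hστ⟩, -⟩ := hIy' σ hσ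
      obtain ⟨h1, h2⟩ := eq_of_inv_mul_mem_Gxy hστ
      exact ⟨τ, Subgroup.subset_closure (Or.inr hτ), by rw [h1, hσx], by rw [h2, hσy]⟩
  intro a ha
  induction ha with
  | refl => exact ⟨1, one_mem _, rfl, rfl⟩
  | @tail a b ha hab ih =>
    obtain ⟨σ, hσ, hσx, hσy⟩ := ih
    have hb : b ∈ orbit St w x y := Relation.ReflTransGen.tail ha hab
    have hb1 : b.1 ∈ orbitF St w x y := subset_adjoin _ _ (Or.inr ⟨b, hb, Or.inl rfl⟩)
    have hb2 : b.2 ∈ orbitF St w x y := subset_adjoin _ _ (Or.inr ⟨b, hb, Or.inr rfl⟩)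
    have hM : Adj St w (σ ⟨x, x_mem_orbitF St w x y⟩, σ ⟨y, y_mem_orbitF St w x y⟩)
        ((⟨b.1, hb1⟩, ⟨b.2, hb2⟩) : orbitF St w x y × orbitF St w x y) := by
      refine (adj_map_iff (orbitF St w x y).val).1 ?_
      change Adj St w (_, _) b
      exact (congrArg₂ (fun s t => Adj St w (s, t) b) hσx hσy).mpr hab
    have hM' := (adj_map_iff (orbitF St w x y).val).2 ((adj_map_iff σ.symm.toAlgHom).2 hM)
    change Adj St w (((σ.symm (σ ⟨x, _⟩) : orbitF St w x y) : K),
      ((σ.symm (σ ⟨y, _⟩) : orbitF St w x y) : K)) (((σ.symm ⟨b.1, hb1⟩ : orbitF St w x y) : K),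
      ((σ.symm ⟨b.2, hb2⟩ : orbitF St w x y) : K)) at hM'
    rw [σ.symm_apply_apply, σ.symm_apply_apply] at hM'
    obtain ⟨τ, hτ, hτx, hτy⟩ := adj_self hM'
    refine ⟨σ * τ, mul_mem hσ hτ, ?_, ?_⟩
    · rw [AlgEquiv.mul_apply, Subtype.ext hτx, σ.apply_symm_apply]
    · rw [AlgEquiv.mul_apply, Subtype.ext hτy, σ.apply_symm_apply]

end QuadrantWalk
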